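/- arXiv:2103.01528 — 6 statements merged into one kernel-verified Lean document; each statement's English description precedes it below -/
import Mathlib

section
/- Let n ≥ 3. For every drone tour and every intermediate node i ∈ {1, …, n}, the lifted Miller–Tucker–Zemlin inequality (DL-1) holds: 1 + (1 − x_{0i}) + (n − 2)·x_{i,n+1} ≤ u(i) ≤ (n + 1) − (n − 1)·x_{0i} − (1 − x_{i,n+1}). -/
/-- Arc indicator of a drone tour on the node set `H = {0, 1, …, n+1}` (modelled as
`Fin (n+2)`): `xind n u i j = 1` iff `(i,j)` is in the arc set
`A = {(i,j) : i ≠ j, i ≠ n+1, j ≠ 0}` and `j` is visited immediately after `i`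
(i.e. `u j = u i + 1`); by convention it is `0` for pairs outside `A`. -/
def xind (n : ℕ) (u : Fin (n + 2) → Fin (n + 2)) (i j : Fin (n + 2)) : ℤ :=
  if i ≠ j ∧ i ≠ Fin.last (n + 1) ∧ j ≠ 0 ∧ (u j : ℕ) = (u i : ℕ) + 1 then 1 else 0

theorem xind_zero_left {n : ℕ} {u : Fin (n + 2) → Fin (n + 2)} (h0 : u 0 = 0)
    (i : Fin (n + 2)) : xind n u 0 i = if (u i : ℕ) = 1 then 1 else 0 := by
  have ne_zero_of_rank_one : (u i : ℕ) = 1 → i ≠ 0 := by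
    rintro hrank rfl
    simp [h0] at hrank
  have zero_ne_last : (0 : Fin (n + 2)) ≠ Fin.last (n + 1) := Fin.last_pos.ne
  unfold xind
  refine if_congr ⟨fun ⟨_, _, _, hrank⟩ ↦ by simpa [h0] using hrank, fun hrank ↦ ?_⟩ rfl rfl
  exact ⟨(ne_zero_of_rank_one hrank).symm, zero_ne_last, ne_zero_of_rank_one hrank,
    by simpa [h0] using hrank⟩

theorem xind_last_right {n : ℕ} {u : Fin (n + 2) → Fin (n + 2)}
    (hlast : u (Fin.last (n + 1)) = Fin.last (n + 1)) (i : Fin (n + 2)) :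
    xind n u i (Fin.last (n + 1)) = if (u i : ℕ) = n then 1 else 0 := by
  have ne_last_of_rank_eq : (u i : ℕ) = n → i ≠ Fin.last (n + 1) := by
    rintro hrank rfl
    simp [hlast] at hrank
  have last_ne_zero : Fin.last (n + 1) ≠ 0 := Fin.last_pos.ne'
  unfold xind
  refine if_congr ⟨fun ⟨_, _, _, hrank⟩ ↦ ?_, fun hrank ↦ ?_⟩ rfl rfl
  · simpa [hlast, eq_comm] using hrank
  · exact ⟨ne_last_of_rank_eq hrank, ne_last_of_rank_eq hrank, last_ne_zero,
      by simp [hlast, hrank]⟩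

-- The generic bound `2` drops to `1` at `r = 1` and is lifted by `n - 2` to the exact rank at
-- `r = n`; when `r = n = 1` both corrections apply and leave only `0 ≤ 1`.
theorem lifted_lower_bound_le_rank (n : ℕ) {r : ℕ} (hr : 1 ≤ r) :
    1 + (1 - if r = 1 then 1 else 0) + ((n : ℤ) - 2) * (if r = n then 1 else 0) ≤ (r : ℤ) := by
  split_ifs <;> lia

-- The generic bound `n` is lowered by `n - 1` to the exact rank at `r = 1` and weakens to `n + 1`
-- at `r = n`.
theorem rank_le_lifted_upper_bound {n r : ℕ} (hr : r ≤ n) :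
    (r : ℤ) ≤ ((n : ℤ) + 1) - ((n : ℤ) - 1) * (if r = 1 then 1 else 0)
        - (1 - if r = n then 1 else 0) := by
  split_ifs <;> lia

theorem dl1_valid_general {n : ℕ} {u : Fin (n + 2) → Fin (n + 2)}
    (h0 : u 0 = 0) (hlast : u (Fin.last (n + 1)) = Fin.last (n + 1))
    {i : Fin (n + 2)} (hi0 : u i ≠ 0) (hil : u i ≠ Fin.last (n + 1)) :
    1 + (1 - xind n u 0 i) + ((n : ℤ) - 2) * xind n u i (Fin.last (n + 1)) ≤ (u i : ℤ) ∧
    (u i : ℤ) ≤ ((n : ℤ) + 1) - ((n : ℤ) - 1) * xind n u 0 i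
        - (1 - xind n u i (Fin.last (n + 1))) := by
  have one_le_rank : 1 ≤ (u i : ℕ) := Fin.pos_iff_ne_zero.mpr hi0
  have rank_le : (u i : ℕ) ≤ n := Nat.le_of_lt_succ (Fin.val_lt_last hil)
  rw [xind_zero_left h0, xind_last_right hlast]
  exact ⟨lifted_lower_bound_le_rank n one_le_rank, rank_le_lifted_upper_bound rank_le⟩

/-- Proposition 2 (constraint DL-1): for every drone tour (a bijection `u` of
`{0,…,n+1}` with `u 0 = 0` and `u (n+1) = n+1`) and every intermediate node `i`,
`1 + (1 − x_{0i}) + (n − 2)·x_{i,n+1} ≤ u(i) ≤ (n+1) − (n−1)·x_{0i} − (1 − x_{i,n+1})`. -/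
theorem dl1_valid (n : ℕ) (hn : 3 ≤ n)
    (u : Fin (n + 2) → Fin (n + 2)) (hu : Function.Bijective u)
    (h0 : u 0 = 0) (hlast : u (Fin.last (n + 1)) = Fin.last (n + 1))
    (i : Fin (n + 2)) (hi0 : i ≠ 0) (hil : i ≠ Fin.last (n + 1)) :
    1 + (1 - xind n u 0 i) + ((n : ℤ) - 2) * xind n u i (Fin.last (n + 1)) ≤ (u i : ℤ) ∧
    (u i : ℤ) ≤ ((n : ℤ) + 1) - ((n : ℤ) - 1) * xind n u 0 i
        - (1 - xind n u i (Fin.last (n + 1))) :=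
  dl1_valid_general h0 hlast (h0 ▸ hu.injective.ne hi0) (hlast ▸ hu.injective.ne hil)
end

section
/- Let n ≥ 3. For every drone tour and every arc (i,j) ∈ A with i ≠ 0, the lifted Miller–Tucker–Zemlin inequality (DL-2) holds: u(i) − u(j) + (n + 1)·x_{ij} + (n − 1)·x_{ji} ≤ n. -/
/-!
If one of the two arc indicators is `1`, the ranks of `i` and `j` differ by exactly one and the
inequality is an equality. If both vanish, it only says `u i - u j ≤ n`, which fails for ranks in
`{0, …, n + 1}` only when `u i = n + 1` and `u j = 0`.
-/

theorem lifted_mtz_of_sub_le {R : Type*} [CommRing R] [LinearOrder R] [IsStrictOrderedRing R]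
    {a b m x y : R} (hab : a - b ≤ m) (hx : x = 0 ∨ x = 1 ∧ b = a + 1)
    (hy : y = 0 ∨ y = 1 ∧ a = b + 1) :
    a - b + (m + 1) * x + (m - 1) * y ≤ m := by
  rcases hx with rfl | ⟨rfl, hba⟩
  · rcases hy with rfl | ⟨rfl, hab_succ⟩
    · simpa using hab
    · rw [hab_succ]
      exact le_of_eq (by ring)
  · have hy_zero : y = 0 := hy.resolve_right fun ⟨_, hab_succ⟩ => by linarith [hab_succ]
    rw [hy_zero, hba]
    exact le_of_eq (by ring)

theorem val_sub_val_lt_of_ne_last_or_ne_zero {n : ℕ} {a b : Fin (n + 1)}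
    (h : a ≠ Fin.last n ∨ b ≠ 0) : (a : ℤ) - (b : ℤ) < n := by
  rcases h with ha | hb
  · have ha_lt : (a : ℕ) < n := Fin.val_lt_last ha
    omega
  · have hb_pos : 0 < (b : ℕ) := Fin.pos_iff_ne_zero.mpr hb
    omega

theorem xind_eq_zero_or_eq_one_and_rank_eq_add_one (n : ℕ) (u : Fin (n + 2) → Fin (n + 2))
    (i j : Fin (n + 2)) :
    xind n u i j = 0 ∨ xind n u i j = 1 ∧ (u j : ℤ) = (u i : ℤ) + 1 := by
  unfold xind
  split_ifs with h
  · exact .inr ⟨rfl, mod_cast h.2.2.2⟩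
  · exact .inl rfl

theorem dl2_valid_general {n : ℕ} {u : Fin (n + 2) → Fin (n + 2)} {i j : Fin (n + 2)}
    (h : u i ≠ Fin.last (n + 1) ∨ u j ≠ 0) :
    (u i : ℤ) - (u j : ℤ) + ((n : ℤ) + 1) * xind n u i j
      + ((n : ℤ) - 1) * xind n u j i ≤ (n : ℤ) := by
  have rank_sub_le : (u i : ℤ) - (u j : ℤ) ≤ n :=
    Int.le_of_lt_add_one (mod_cast val_sub_val_lt_of_ne_last_or_ne_zero h)
  exact lifted_mtz_of_sub_le rank_sub_le
    (xind_eq_zero_or_eq_one_and_rank_eq_add_one n u i j)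
    (xind_eq_zero_or_eq_one_and_rank_eq_add_one n u j i)

/-- Proposition 2 (constraint DL-2): for every drone tour and every arc `(i,j) ∈ A`
with `i ≠ 0`, `u(i) − u(j) + (n+1)·x_{ij} + (n−1)·x_{ji} ≤ n`. -/
theorem dl2_valid (n : ℕ) (hn : 3 ≤ n)
    (u : Fin (n + 2) → Fin (n + 2)) (hu : Function.Bijective u)
    (h0 : u 0 = 0) (hlast : u (Fin.last (n + 1)) = Fin.last (n + 1))
    (i j : Fin (n + 2)) (hij : i ≠ j) (hi : i ≠ Fin.last (n + 1)) (hj : j ≠ 0)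
    (hi0 : i ≠ 0) :
    (u i : ℤ) - (u j : ℤ) + ((n : ℤ) + 1) * xind n u i j
      + ((n : ℤ) - 1) * xind n u j i ≤ (n : ℤ) :=
  dl2_valid_general (.inl fun h => hi (hu.injective (h.trans hlast.symm)))
end

section
/- Let n ≥ 3. For every drone tour and every node i ∈ H with i ≠ n+1, the Reformulation–Linearization identity (SD-1) holds: Σ_{j : (i,j) ∈ A, j ≠ n+1} y_{ij} + n·x_{i,n+1} = u(i). -/
/-!
This is the reformulation–linearization argument: multiply the out-degree equation
`∑ j, x i j = 1` of a node `i ≠ n + 1` by its rank `u i`. The term at `j = n + 1` then linearizes to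
`n * x i (n + 1)`, because the node preceding the last one has rank `n`.
-/

section

variable (n : ℕ) (u : Fin (n + 2) → Fin (n + 2)) (i : Fin (n + 2))

theorem xind_self : xind n u i i = 0 := by
  simp [xind]

theorem xind_zero_right : xind n u i 0 = 0 := by
  simp [xind]

theorem sum_xind_inner_add_xind_last :
    ∑ j ∈ Finset.univ.filter (fun j => i ≠ j ∧ j ≠ 0 ∧ j ≠ Fin.last (n + 1)), xind n u i j
      + xind n u i (Fin.last (n + 1)) = ∑ j, xind n u i j := by
  rw [← Finset.sum_erase_add _ _ (Finset.mem_univ (Fin.last (n + 1)))]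
  congr 1
  refine Finset.sum_subset (fun j hj => ?_) fun j hj hj' => ?_
  · simp_all
  · obtain rfl | rfl : i = j ∨ j = 0 := by
      by_contra! h
      simp_all
    · exact xind_self n u i
    · exact xind_zero_right n u i

variable {n u i}

theorem xind_eq_ite_rank (h0 : u 0 = 0) (hi : i ≠ Fin.last (n + 1)) (j : Fin (n + 2)) :
    xind n u i j = if (u j : ℕ) = u i + 1 then 1 else 0 := by
  refine if_congr ⟨fun h => h.2.2.2, fun h => ⟨?_, hi, ?_, h⟩⟩ rfl rfl
  · rintro rfl
    omega
  · rintro rfl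
    simp [h0] at h

theorem existsUnique_rank_eq_succ (hu : Function.Bijective u)
    (hlast : u (Fin.last (n + 1)) = Fin.last (n + 1)) (hi : i ≠ Fin.last (n + 1)) :
    ∃! j, (u j : ℕ) = u i + 1 := by
  have rank_ne_last : u i ≠ Fin.last (n + 1) := fun h => hi (hu.injective (h.trans hlast.symm))
  have rank_lt : (u i : ℕ) < n + 1 := Fin.val_lt_last rank_ne_last
  simpa only [Fin.ext_iff] using hu.existsUnique ⟨u i + 1, Nat.succ_lt_succ rank_lt⟩

theorem sum_xind_eq_one (hu : Function.Bijective u) (h0 : u 0 = 0)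
    (hlast : u (Fin.last (n + 1)) = Fin.last (n + 1)) (hi : i ≠ Fin.last (n + 1)) :
    ∑ j, xind n u i j = 1 := by
  obtain ⟨next, rank_next, next_unique⟩ := existsUnique_rank_eq_succ hu hlast hi
  calc
    ∑ j, xind n u i j = xind n u i next :=
      Fintype.sum_eq_single next fun j hj => by
        rw [xind_eq_ite_rank h0 hi, if_neg fun h => hj (next_unique j h)]
    _ = 1 := by rw [xind_eq_ite_rank h0 hi, if_pos rank_next]

theorem rank_mul_xind_last (hlast : u (Fin.last (n + 1)) = Fin.last (n + 1)) (i : Fin (n + 2)) :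
    (u i : ℤ) * xind n u i (Fin.last (n + 1)) = n * xind n u i (Fin.last (n + 1)) := by
  unfold xind
  split_ifs with harc
  · have rank_last : n + 1 = (u i : ℕ) + 1 := by simpa only [hlast, Fin.val_last] using harc.2.2.2
    rw [← Nat.succ.inj rank_last]
  · simp only [mul_zero]

end

/-- Proposition 3 (constraint SD-1): for every drone tour and every node `i ≠ n+1`,
`Σ_{j : (i,j) ∈ A, j ≠ n+1} y_{ij} + n·x_{i,n+1} = u(i)`, where the RLT auxiliary
variables are `y_{ij} = u(i)·x_{ij}`. -/
theorem sd1_valid (n : ℕ) (hn : 3 ≤ n)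
    (u : Fin (n + 2) → Fin (n + 2)) (hu : Function.Bijective u)
    (h0 : u 0 = 0) (hlast : u (Fin.last (n + 1)) = Fin.last (n + 1))
    (i : Fin (n + 2)) (hi : i ≠ Fin.last (n + 1)) :
    (∑ j ∈ Finset.univ.filter
        (fun j : Fin (n + 2) => i ≠ j ∧ j ≠ 0 ∧ j ≠ Fin.last (n + 1)),
        (u i : ℤ) * xind n u i j)
      + (n : ℤ) * xind n u i (Fin.last (n + 1)) = (u i : ℤ) := by
  rw [← Finset.mul_sum, ← rank_mul_xind_last hlast i, ← mul_add, sum_xind_inner_add_xind_last,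
    sum_xind_eq_one hu h0 hlast hi, mul_one]
end

section
/- Let n ≥ 3. For every drone tour and every arc (i,j) ∈ A with i ≠ 0, the Reformulation–Linearization inequalities (SD-4) hold: u(i) + (n + 1)·(x_{ij} − 1) + n·x_{ji} ≤ y_{ij} + y_{ji} ≤ u(i) − (1 − x_{ij}), where y_{ji} = u(j)·x_{ji} and x_{ji} = 0 whenever (j,i) ∉ A. -/
/-!
The inequalities are the products of the valid inequality `x_{ij} + x_{ji} ≤ 1` with the bound
factors `n + 1 - u(i) ≥ 0` and `u(i) - 1 ≥ 0`. The products linearize because `y_{ji}` can be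
expressed through `u(i)`: as `x_{ji} = 1` forces `u(j) = u(i) - 1`, we have
`y_{ji} = (u(i) - 1) x_{ji}`.
-/

section

variable (n : ℕ) (u : Fin (n + 2) → Fin (n + 2)) (i j : Fin (n + 2))

lemma xind_add_xind_swap_le_one :
    xind n u i j + xind n u j i ≤ 1 := by
  unfold xind
  split_ifs <;> omega

lemma rank_mul_xind_eq_sub_one_mul_xind :
    (u i : ℤ) * xind n u i j = ((u j : ℤ) - 1) * xind n u i j := by
  unfold xind
  split_ifs with h
  · have hsucc : (u j : ℕ) = (u i : ℕ) + 1 := h.2.2.2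
    rw [hsucc]
    push_cast
    ring
  · simp

theorem sd4_valid_general (hui : u i ≠ 0) :
    (u i : ℤ) + ((n : ℤ) + 1) * (xind n u i j - 1) + (n : ℤ) * xind n u j i ≤
        (u i : ℤ) * xind n u i j + (u j : ℤ) * xind n u j i ∧
    (u i : ℤ) * xind n u i j + (u j : ℤ) * xind n u j i ≤
        (u i : ℤ) - (1 - xind n u i j) := by
  have slack_nonneg : 0 ≤ 1 - (xind n u i j + xind n u j i) :=
    sub_nonneg.mpr (xind_add_xind_swap_le_one n u i j)
  have upper_factor_nonneg : 0 ≤ (n : ℤ) + 1 - (u i : ℤ) := by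
    have := (u i).is_le
    omega
  have lower_factor_nonneg : 0 ≤ (u i : ℤ) - 1 := by
    have := Fin.pos_iff_ne_zero.mpr hui
    omega
  rw [rank_mul_xind_eq_sub_one_mul_xind n u j i]
  constructor
  · linear_combination mul_nonneg upper_factor_nonneg slack_nonneg
  · linear_combination mul_nonneg lower_factor_nonneg slack_nonneg

end

/-- Proposition 3 (constraint SD-4): for every drone tour and every arc `(i,j) ∈ A`
with `i ≠ 0`,
`u(i) + (n+1)·(x_{ij} − 1) + n·x_{ji} ≤ y_{ij} + y_{ji} ≤ u(i) − (1 − x_{ij})`,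
where `y_{ij} = u(i)·x_{ij}` and `y_{ji} = u(j)·x_{ji}`. -/
theorem sd4_valid (n : ℕ) (hn : 3 ≤ n)
    (u : Fin (n + 2) → Fin (n + 2)) (hu : Function.Bijective u)
    (h0 : u 0 = 0) (hlast : u (Fin.last (n + 1)) = Fin.last (n + 1))
    (i j : Fin (n + 2)) (hij : i ≠ j) (hi : i ≠ Fin.last (n + 1)) (hj : j ≠ 0)
    (hi0 : i ≠ 0) :
    (u i : ℤ) + ((n : ℤ) + 1) * (xind n u i j - 1) + (n : ℤ) * xind n u j i ≤
        (u i : ℤ) * xind n u i j + (u j : ℤ) * xind n u j i ∧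
    (u i : ℤ) * xind n u i j + (u j : ℤ) * xind n u j i ≤
        (u i : ℤ) - (1 - xind n u i j) :=
  sd4_valid_general n u i j fun hui => hi0 (hu.injective (hui.trans h0.symm))
end

section
/- Let n ≥ 1, let H = {0, 1, …, n+1}, and let A = {(i,j) : i, j ∈ H, i ≠ j, i ≠ n+1, j ≠ 0}. Suppose x : A → {0,1} satisfies the degree constraints Σ_{j : (i,j) ∈ A} x_{ij} = 1 for every i ∈ H with i ≠ n+1 and Σ_{i : (i,j) ∈ A} x_{ij} = 1 for every j ∈ H with j ≠ 0, and suppose there exists u : H → ℝ such that u(j)·x_{ij} = (u(i) + 1)·x_{ij} for every (i,j) ∈ A. Then the arcs {(i,j) ∈ A : x_{ij} = 1} form a directed Hamiltonian path from 0 to n+1; that is, there is an enumeration v_0 = 0, v_1, …, v_{n+1} = n+1 of all nodes of H such that x_{v_k v_{k+1}} = 1 for k = 0, …, n and x_{ij} = 0 for every other arc (i,j) ∈ A. In particular, the arc set selected by x contains no directed subtour (cycle). -/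
/-- The arc set `A = {(i,j) : i, j ∈ H, i ≠ j, i ≠ n+1, j ≠ 0}` on the node set
`H = {0, 1, …, n+1}` (modelled as `Fin (n+2)`). -/
def arc (n : ℕ) (i j : Fin (n + 2)) : Prop :=
  i ≠ j ∧ i ≠ Fin.last (n + 1) ∧ j ≠ 0

instance (n : ℕ) (i j : Fin (n + 2)) : Decidable (arc n i j) := by
  unfold arc; infer_instance

/-!
By the degree constraints the selected arcs, closed up by the extra arc from the sink back to the
source, are the graph of a permutation of the nodes. Ranks strictly increase along selected arcs, so
no cycle of this permutation avoids the extra arc. Hence there is only one cycle, and removing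
the extra arc from it leaves a Hamiltonian path.
-/

theorem existsUnique_mem_eq_one_of_sum_eq_one {α R : Type*} [NonAssocSemiring R] [CharZero R]
    {S : Finset α} {g : α → R} (h01 : ∀ a ∈ S, g a = 0 ∨ g a = 1) (hsum : ∑ a ∈ S, g a = 1) :
    ∃! a, a ∈ S ∧ g a = 1 := by
  classical
  have hcast : ((S.filter (g · = 1)).card : R) = 1 := by
    rw [← Finset.sum_boole]
    refine (Finset.sum_congr rfl fun a ha => ?_).trans hsum
    rcases h01 a ha with h | h <;> simp [h]
  have hcard : (S.filter (g · = 1)).card = 1 := by exact_mod_cast hcast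
  simpa only [Finset.card_eq_one, Finset.singleton_iff_unique_mem, Finset.mem_filter] using hcard

section Path

variable {V : Type*} {r : V → V → Prop} {s t : V} {σ : Equiv.Perm V}

/-- The sequence `v` is a directed Hamiltonian path from `s` to `t` which uses all the arcs of the
relation `r`: it visits every node once, and the arcs of `r` are exactly the pairs of consecutive
nodes of `v`. -/
structure IsHamiltonianPath {m : ℕ} (r : V → V → Prop) (s t : V) (v : Fin (m + 1) → V) :
    Prop where
  bijective : Function.Bijective v
  apply_zero : v 0 = s
  apply_last : v (Fin.last m) = t
  rel_iff : ∀ i j, r i j ↔ ∃ k : Fin m, i = v k.castSucc ∧ j = v k.succ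

theorem exists_perm_forall_rel_iff (hout : ∀ i, i ≠ t → ∃! j, r i j)
    (hin : ∀ j, j ≠ s → ∃! i, r i j) (ht : ∀ j, ¬ r t j) (hs : ∀ i, ¬ r i s) :
    ∃ σ : Equiv.Perm V, σ t = s ∧ ∀ i j, r i j ↔ i ≠ t ∧ σ i = j := by
  classical
  choose! next hnext hnext_unique using hout
  have ne_sink {i j} (h : r i j) : i ≠ t := fun hi => ht j (hi ▸ h)
  have ne_source {i j} (h : r i j) : j ≠ s := fun hj => hs i (hj ▸ h)
  let f : V → V := Function.update next t s
  have f_sink : f t = s := Function.update_self ..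
  have rel_iff (i j) : r i j ↔ i ≠ t ∧ f i = j := by
    constructor
    · intro h
      have hi := ne_sink h
      exact ⟨hi, (Function.update_of_ne hi ..).trans (hnext_unique i hi j h).symm⟩
    · rintro ⟨hi, rfl⟩
      simpa only [f, Function.update_of_ne hi] using hnext i hi
  have rel_f {i} (hi : i ≠ t) : r i (f i) := (rel_iff i (f i)).2 ⟨hi, rfl⟩
  have f_ne_source {i} (hi : i ≠ t) : f i ≠ s := ne_source (rel_f hi)
  have f_injective : Function.Injective f := by
    intro a b hab
    by_cases ha : a = t <;> by_cases hb : b = t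
    · rw [ha, hb]
    · exact absurd (hab ▸ ha ▸ f_sink) (f_ne_source hb)
    · exact absurd (hab ▸ hb ▸ f_sink) (f_ne_source ha)
    · exact (hin _ (f_ne_source ha)).unique (rel_f ha) (hab ▸ rel_f hb)
  have f_surjective : Function.Surjective f := by
    intro j
    by_cases hj : j = s
    · exact ⟨t, f_sink.trans hj.symm⟩
    · obtain ⟨i, hi⟩ := (hin j hj).exists
      exact ⟨i, ((rel_iff i j).1 hi).2⟩
  exact ⟨Equiv.ofBijective f ⟨f_injective, f_surjective⟩, f_sink, rel_iff⟩

theorem isCycleOn_univ_of_forall_ne_lt_apply [Finite V] {P : Type*} [Preorder P] {u : V → P}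
    (hu : ∀ i, i ≠ t → u i < u (σ i)) : σ.IsCycleOn Set.univ := by
  have sameCycle_sink (i : V) : σ.SameCycle i t := by
    by_contra hi
    have pow_ne_sink (k : ℕ) : (σ ^ k) i ≠ t := fun h => hi ⟨k, by simpa using h⟩
    have hmono : StrictMono fun k : ℕ => u ((σ ^ k) i) :=
      strictMono_nat_of_lt_succ fun k => by
        simpa only [pow_succ', Equiv.Perm.mul_apply] using hu _ (pow_ne_sink k)
    simpa [pow_orderOf_eq_one] using hmono (orderOf_pos σ)
  exact ⟨Set.bijOn_univ.2 σ.bijective,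
    fun i _ j _ => (sameCycle_sink i).trans (sameCycle_sink j).symm⟩

theorem isHamiltonianPath_pow_of_isCycleOn_univ [Fintype V] {m : ℕ} (hcard : Fintype.card V = m + 1)
    (hσ : σ.IsCycleOn Set.univ) (hts : σ t = s) (hr : ∀ i j, r i j ↔ i ≠ t ∧ σ i = j) :
    IsHamiltonianPath r s t fun k : Fin (m + 1) => (σ ^ (k : ℕ)) s := by
  have hσ' : σ.IsCycleOn (Finset.univ : Finset V) := by rwa [Finset.coe_univ]
  have hsurj : Function.Surjective fun k : Fin (m + 1) => (σ ^ (k : ℕ)) s := fun i => by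
    obtain ⟨k, hk, hki⟩ := hσ'.exists_pow_eq (Finset.mem_univ s) (Finset.mem_univ i)
    exact ⟨⟨k, by rwa [Finset.card_univ, hcard] at hk⟩, hki⟩
  have hbij := hsurj.bijective_of_nat_card_le (by simp [hcard])
  have hlast : (σ ^ m) s = t := by
    apply σ.injective
    rw [hts, ← Equiv.Perm.mul_apply, ← pow_succ', ← hcard]
    exact hσ'.pow_card_apply (Finset.mem_univ s)
  refine ⟨hbij, rfl, hlast, fun i j => (hr i j).trans ⟨?_, ?_⟩⟩
  · rintro ⟨hi, rfl⟩
    obtain ⟨k, rfl⟩ := hsurj i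
    obtain ⟨k, rfl⟩ | rfl := k.eq_castSucc_or_eq_last
    · exact ⟨k, rfl, by simp [pow_succ']⟩
    · exact absurd hlast hi
  · rintro ⟨k, rfl, rfl⟩
    refine ⟨fun hk => k.castSucc_ne_last (hbij.injective (hk.trans hlast.symm)), ?_⟩
    simp [pow_succ']

theorem exists_isHamiltonianPath_of_forall_rel_lt [Fintype V] {m : ℕ}
    (hcard : Fintype.card V = m + 1) (hout : ∀ i, i ≠ t → ∃! j, r i j)
    (hin : ∀ j, j ≠ s → ∃! i, r i j) (ht : ∀ j, ¬ r t j) (hs : ∀ i, ¬ r i s)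
    {P : Type*} [Preorder P] {u : V → P} (hu : ∀ i j, r i j → u i < u j) :
    ∃ v : Fin (m + 1) → V, IsHamiltonianPath r s t v := by
  obtain ⟨σ, hts, hr⟩ := exists_perm_forall_rel_iff hout hin ht hs
  have hσ : σ.IsCycleOn Set.univ :=
    isCycleOn_univ_of_forall_ne_lt_apply fun i hi => hu i (σ i) ((hr i (σ i)).2 ⟨hi, rfl⟩)
  exact ⟨_, isHamiltonianPath_pow_of_isCycleOn_univ hcard hσ hts hr⟩

theorem rank_constraints_give_hamiltonian_path_general [Fintype V] {m : ℕ}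
    (hcard : Fintype.card V = m + 1) {A : V → V → Prop} [DecidableRel A]
    (hA_sink : ∀ j, ¬ A t j) (hA_source : ∀ i, ¬ A i s)
    {R : Type*} [NonAssocSemiring R] [CharZero R] {x : V → V → R}
    (hx01 : ∀ i j, A i j → x i j = 0 ∨ x i j = 1)
    (hdeg_out : ∀ i, i ≠ t → ∑ j ∈ Finset.univ.filter (fun j => A i j), x i j = 1)
    (hdeg_in : ∀ j, j ≠ s → ∑ i ∈ Finset.univ.filter (fun i => A i j), x i j = 1)
    {P : Type*} [Preorder P] {u : V → P} (hu : ∀ i j, A i j → x i j = 1 → u i < u j) :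
    ∃ v : Fin (m + 1) → V, IsHamiltonianPath (fun i j => A i j ∧ x i j = 1) s t v := by
  refine exists_isHamiltonianPath_of_forall_rel_lt hcard (fun i hi => ?_) (fun j hj => ?_)
    (fun j h => hA_sink j h.1) (fun i h => hA_source i h.1) fun i j h => hu i j h.1 h.2
  · simpa only [Finset.mem_filter_univ] using
      existsUnique_mem_eq_one_of_sum_eq_one (by simpa using hx01 i) (hdeg_out i hi)
  · simpa only [Finset.mem_filter_univ] using
      existsUnique_mem_eq_one_of_sum_eq_one (by simpa using (hx01 · j)) (hdeg_in j hj)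

end Path

/-- Claim in the proof of Proposition 3: the quadratic rank constraints
`u(j)·x_{ij} = (u(i)+1)·x_{ij}` for all arcs, together with the out-degree-one and
in-degree-one constraints, force the arcs selected by the binary variables `x` to form
a directed Hamiltonian path from node `0` to node `n+1`; in particular, no directed
subtour is selected. -/
theorem rank_constraints_give_hamiltonian_path (n : ℕ) (hn : 1 ≤ n)
    (x : Fin (n + 2) → Fin (n + 2) → ℝ)
    (hx01 : ∀ i j, arc n i j → x i j = 0 ∨ x i j = 1)
    (hdeg_out : ∀ i : Fin (n + 2), i ≠ Fin.last (n + 1) →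
      ∑ j ∈ Finset.univ.filter (fun j => arc n i j), x i j = 1)
    (hdeg_in : ∀ j : Fin (n + 2), j ≠ 0 →
      ∑ i ∈ Finset.univ.filter (fun i => arc n i j), x i j = 1)
    (u : Fin (n + 2) → ℝ)
    (hrank : ∀ i j, arc n i j → u j * x i j = (u i + 1) * x i j) :
    ∃ v : Fin (n + 2) → Fin (n + 2),
      Function.Bijective v ∧
      v 0 = 0 ∧ v (Fin.last (n + 1)) = Fin.last (n + 1) ∧
      (∀ k : Fin (n + 1), x (v k.castSucc) (v k.succ) = 1) ∧
      (∀ i j, arc n i j → x i j = 1 →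
        ∃ k : Fin (n + 1), i = v k.castSucc ∧ j = v k.succ) := by
  have rank_lt (i j) (hij : arc n i j) (hx : x i j = 1) : u i < u j := by
    linarith [hx ▸ hrank i j hij]
  obtain ⟨v, hv⟩ := rank_constraints_give_hamiltonian_path_general (Fintype.card_fin (n + 2))
    (fun _ h => h.2.1 rfl) (fun _ h => h.2.2 rfl) hx01 hdeg_out hdeg_in rank_lt
  exact ⟨v, hv.bijective, hv.apply_zero, hv.apply_last,
    fun k => ((hv.rel_iff _ _).2 ⟨k, rfl, rfl⟩).2, fun i j hij hx => (hv.rel_iff i j).1 ⟨hij, hx⟩⟩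
end

section
/- Let T_bl > 0 and T_s ≥ 0 be real numbers, and let U be a nonempty finite set (of nested units). For each u ∈ U, let D_u ≥ 0 (drone travel time), O_u ≥ 0 (observation time), W_u ≥ 0 (drone idling time), and δ_u ≥ 0 (wasted battery slack) be real numbers satisfying the battery-balance identity D_u + O_u + W_u + δ_u = T_bl. Define the mission makespan M = Σ_{u ∈ U} (D_u + O_u + W_u) + |U|·T_s. Then for any real numbers L ≥ 0 and Θ ≥ 0 with Σ_{u ∈ U} D_u ≥ L and Σ_{u ∈ U} O_u ≥ Θ, one has M ≥ L + Θ + ⌊(L + Θ)/T_bl⌋·T_s, where ⌊·⌋ denotes the floor function. -/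
section

variable {K : Type*} [Field K] [LinearOrder K] [IsStrictOrderedRing K] [FloorRing K]

theorem ceil_div_le_card_of_le_sum {ι : Type*} {s : Finset ι} {l : ι → K} {T t : K}
    (hT : 0 < T) (hl : ∀ i ∈ s, l i ≤ T) (ht : t ≤ ∑ i ∈ s, l i) :
    ⌈t / T⌉ ≤ (s.card : ℤ) := by
  rw [Int.ceil_le, Int.cast_natCast, div_le_iff₀ hT, ← nsmul_eq_mul]
  exact ht.trans (s.sum_le_card_nsmul l T hl)

theorem add_ceil_div_mul_le_sum_add_card_mul {ι : Type*} {s : Finset ι} {l : ι → K} {T t c : K}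
    (hT : 0 < T) (hc : 0 ≤ c) (hl : ∀ i ∈ s, l i ≤ T) (ht : t ≤ ∑ i ∈ s, l i) :
    t + (⌈t / T⌉ : K) * c ≤ (∑ i ∈ s, l i) + (s.card : K) * c := by
  have hceil : (⌈t / T⌉ : K) ≤ s.card := mod_cast ceil_div_le_card_of_le_sum hT hl ht
  gcongr

-- The number of swaps is an integer, which improves the paper's floor to a ceiling.
theorem nestedVRP_makespan_lower_bound_general
    {Tbl Ts : K} (hTbl : 0 < Tbl) (hTs : 0 ≤ Ts)
    {U : Type*} [Fintype U] {D O W δ : U → K}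
    (hW : ∀ u, 0 ≤ W u) (hδ : ∀ u, 0 ≤ δ u)
    (hbal : ∀ u, D u + O u + W u + δ u = Tbl)
    {L Θ : K} (hLD : L ≤ ∑ u, D u) (hΘO : Θ ≤ ∑ u, O u) :
    L + Θ + (⌈(L + Θ) / Tbl⌉ : K) * Ts ≤
      (∑ u, (D u + O u + W u)) + (Fintype.card U : K) * Ts := by
  have interval_le_battery : ∀ u ∈ Finset.univ, D u + O u + W u ≤ Tbl := fun u _ =>
    (le_add_of_nonneg_right (hδ u)).trans_eq (hbal u)
  have le_total_interval : L + Θ ≤ ∑ u, (D u + O u + W u) :=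
    calc
      L + Θ ≤ (∑ u, D u) + ∑ u, O u := add_le_add hLD hΘO
      _ = ∑ u, (D u + O u) := Finset.sum_add_distrib.symm
      _ ≤ ∑ u, (D u + O u + W u) :=
        Finset.sum_le_sum fun u _ => le_add_of_nonneg_right (hW u)
  exact add_ceil_div_mul_le_sum_add_card_mul hTbl hTs interval_le_battery le_total_interval

end

/-- Theorem 3 of the paper (lower bound on the Nested-VRP mission makespan): if the
mission decomposes into a nonempty finite set `U` of nested units whose battery usage
satisfies `D_u + O_u + W_u + δ_u = T_bl` for every unit `u`, and the makespan is
`M = Σ_u (D_u + O_u + W_u) + |U|·T_s`, then for any nonnegative lower bounds `L` on the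
total drone travel time and `Θ` on the total observation time one has
`M ≥ L + Θ + ⌊(L + Θ)/T_bl⌋·T_s`. -/
theorem nestedVRP_makespan_lower_bound
    (Tbl Ts : ℝ) (hTbl : 0 < Tbl) (hTs : 0 ≤ Ts)
    {U : Type*} [Fintype U] [Nonempty U]
    (D O W δ : U → ℝ)
    (hD : ∀ u, 0 ≤ D u) (hO : ∀ u, 0 ≤ O u) (hW : ∀ u, 0 ≤ W u) (hδ : ∀ u, 0 ≤ δ u)
    (hbal : ∀ u, D u + O u + W u + δ u = Tbl)
    (M : ℝ) (hM : M = (∑ u, (D u + O u + W u)) + (Fintype.card U : ℝ) * Ts)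
    (L Θ : ℝ) (hL : 0 ≤ L) (hΘ : 0 ≤ Θ)
    (hLD : L ≤ ∑ u, D u) (hΘO : Θ ≤ ∑ u, O u) :
    L + Θ + (⌊(L + Θ) / Tbl⌋ : ℝ) * Ts ≤ M := by
  calc
    _ ≤ L + Θ + (⌈(L + Θ) / Tbl⌉ : ℝ) * Ts := by gcongr; exact Int.floor_le_ceil _
    _ ≤ M := hM ▸ nestedVRP_makespan_lower_bound_general hTbl hTs hW hδ hbal hLD hΘO
end
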